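/- (Lemma 4.1, fractional derivative of a quadratic form.) Let β ∈ (0,1), let x : [0,∞) → ℝⁿ be continuously differentiable, and let P be a real symmetric positive definite n×n matrix. Then for all t ≥ 0: (1/2)·(D^β (s ↦ x(s)ᵀ P x(s)))(t) ≤ x(t)ᵀ P (D^β x)(t), where the Caputo derivative of the vector-valued function x is taken componentwise. -/

import Mathlib

open MeasureTheory intervalIntegral Matrix

/-- Caputo fractional derivative of order `β` of a real-valued function `g`. -/
noncomputable def caputo (β : ℝ) (g : ℝ → ℝ) (t : ℝ) : ℝ :=
  (1 / Real.Gamma (1 - β)) * ∫ s in (0:ℝ)..t, (t - s) ^ (-β) * deriv g s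

/-- Componentwise Caputo fractional derivative of a vector-valued function. -/
noncomputable def caputoVec {n : ℕ} (β : ℝ) (x : ℝ → Fin n → ℝ) (t : ℝ) : Fin n → ℝ :=
  fun i => caputo β (fun s => x s i) t

/-!
By symmetry and positivity of `P`, the function
`s ↦ ½ x(s)ᵀ P x(s) - x(t)ᵀ P x(s) = ½ (x(s) - x(t))ᵀ P (x(s) - x(t)) - ½ x(t)ᵀ P x(t)` is minimal
at `s = t`, so by linearity it suffices that a function `g` minimal on `[0, t]` at the endpoint `t`
has nonpositive Caputo derivative there. Integrate by parts against `g(s) - g(t) ≥ 0`: this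
difference is `O(t - s)`, so it kills the singular kernel `(t - s) ^ (-β)` at `s = t`, and since the
kernel increases with `s` the remaining terms are nonpositive.
-/

section PowerKernel

variable {r a b t : ℝ} {f g : ℝ → ℝ}

theorem intervalIntegrable_sub_rpow_mul (hr : -1 < r) (hf : ContinuousOn f (Set.uIcc a b)) :
    IntervalIntegrable (fun s => (t - s) ^ r * f s) volume a b := by
  have hpow : IntervalIntegrable (fun s : ℝ => s ^ r) volume (t - a) (t - b) :=
    intervalIntegrable_rpow' hr
  have hkernel := hpow.comp_sub_left t
  simp only [sub_sub_cancel] at hkernel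
  exact hkernel.mul_continuousOn hf

theorem sub_rpow_mul_sub_eq_neg_mul_dslope (hr : -1 < r) {s : ℝ} (hs : s ≤ t) :
    (t - s) ^ r * (g s - g t) = -((t - s) ^ (r + 1) * dslope g t s) := by
  rw [Real.rpow_add_one' (sub_nonneg.2 hs) (by linarith), ← sub_smul_dslope, smul_eq_mul]
  ring

theorem continuousOn_sub_rpow_mul_sub (hr : -1 < r) (hg : Continuous g)
    (hgt : DifferentiableAt ℝ g t) :
    ContinuousOn (fun s => (t - s) ^ r * (g s - g t)) (Set.Iic t) := by
  have hpow : Continuous fun s : ℝ => (t - s) ^ (r + 1) :=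
    (continuous_const.sub continuous_id).rpow_const fun _ => Or.inr (by linarith)
  have hslope : ContinuousOn (dslope g t) Set.univ :=
    (continuousOn_dslope Filter.univ_mem).2 ⟨hg.continuousOn, hgt⟩
  exact (hpow.continuousOn.mul (hslope.mono (Set.subset_univ _))).neg.congr
    fun _ hs => sub_rpow_mul_sub_eq_neg_mul_dslope hr hs

theorem hasDerivAt_sub_rpow_mul_sub {s : ℝ} (hs : s < t) (hg : DifferentiableAt ℝ g s) :
    HasDerivAt (fun s => (t - s) ^ r * (g s - g t))
      (-r * (t - s) ^ (r - 1) * (g s - g t) + (t - s) ^ r * deriv g s) s := by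
  have hkernel : HasDerivAt (fun s => (t - s) ^ r) (-1 * r * (t - s) ^ (r - 1)) s :=
    ((hasDerivAt_id s).const_sub t).rpow_const (Or.inl (sub_pos.2 hs).ne')
  simpa only [neg_one_mul] using hkernel.fun_mul (hg.hasDerivAt.sub_const (g t))

theorem integral_sub_rpow_mul_deriv_le_of_isMinOn (hr : r ∈ Set.Ioc (-1) 0) (hat : a ≤ t)
    (hg : ContDiff ℝ 1 g) (hmin : IsMinOn g (Set.Icc a t) t) :
    ∫ s in a..t, (t - s) ^ r * deriv g s ≤ -((t - a) ^ r * (g a - g t)) := by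
  have hdiff : Differentiable ℝ g := hg.differentiable one_ne_zero
  have hint : IntervalIntegrable (fun s => (t - s) ^ r * deriv g s) volume a t :=
    intervalIntegrable_sub_rpow_mul hr.1 (hg.continuous_deriv le_rfl).continuousOn
  have hle := integral_le_sub_of_hasDeriv_right_of_le hat
    ((continuousOn_sub_rpow_mul_sub hr.1 hg.continuous (hdiff t)).mono Set.Icc_subset_Iic_self)
    (fun s hs => (hasDerivAt_sub_rpow_mul_sub hs.2 (hdiff s)).hasDerivWithinAt)
    ((intervalIntegrable_iff_integrableOn_Icc_of_le hat).1 hint)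
    (fun s hs => by
      have hpow : 0 ≤ (t - s) ^ (r - 1) := Real.rpow_nonneg (sub_nonneg.2 hs.2.le) _
      have hgs : 0 ≤ g s - g t := sub_nonneg.2 (hmin (Set.Ioo_subset_Icc_self hs))
      exact le_add_of_nonneg_left (mul_nonneg (mul_nonneg (neg_nonneg.2 hr.2) hpow) hgs))
  simpa only [sub_self, mul_zero, zero_sub] using hle

end PowerKernel

section Caputo

variable {β t : ℝ} {f g : ℝ → ℝ}

theorem caputo_const_mul (c : ℝ) (g : ℝ → ℝ) :
    caputo β (fun s => c * g s) t = c * caputo β g t := by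
  simp only [caputo, deriv_const_mul_field, mul_left_comm _ c, intervalIntegral.integral_const_mul]

theorem caputo_sub (hβ : β < 1) (hf : ContDiff ℝ 1 f) (hg : ContDiff ℝ 1 g) :
    caputo β (fun s => f s - g s) t = caputo β f t - caputo β g t := by
  have hr : -1 < -β := neg_lt_neg hβ
  simp only [caputo, deriv_fun_sub (hf.differentiable one_ne_zero _)
    (hg.differentiable one_ne_zero _), mul_sub]
  rw [integral_sub
    (intervalIntegrable_sub_rpow_mul hr (hf.continuous_deriv le_rfl).continuousOn)
    (intervalIntegrable_sub_rpow_mul hr (hg.continuous_deriv le_rfl).continuousOn), mul_sub]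

theorem caputo_sum {ι : Type*} (u : Finset ι) {F : ι → ℝ → ℝ} (hβ : β < 1)
    (hF : ∀ i ∈ u, ContDiff ℝ 1 (F i)) :
    caputo β (fun s => ∑ i ∈ u, F i s) t = ∑ i ∈ u, caputo β (F i) t := by
  have hderiv (s : ℝ) : deriv (fun s => ∑ i ∈ u, F i s) s = ∑ i ∈ u, deriv (F i) s :=
    deriv_fun_sum fun i hi => (hF i hi).differentiable one_ne_zero s
  simp only [caputo, hderiv, Finset.mul_sum]
  rw [integral_finsetSum fun i hi => intervalIntegrable_sub_rpow_mul (neg_lt_neg hβ)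
    ((hF i hi).continuous_deriv le_rfl).continuousOn, Finset.mul_sum]

theorem caputo_dotProduct {n : ℕ} {x : ℝ → Fin n → ℝ} (hβ : β < 1) (v : Fin n → ℝ)
    (hx : ContDiff ℝ 1 x) : caputo β (fun s => v ⬝ᵥ x s) t = v ⬝ᵥ caputoVec β x t := by
  have hxi := contDiff_pi.1 hx
  simp only [dotProduct, caputoVec]
  rw [caputo_sum _ hβ fun i _ => contDiff_const.mul (hxi i)]
  exact Finset.sum_congr rfl fun i _ => caputo_const_mul _ _

theorem caputo_nonpos_of_isMinOn (hβ : β ∈ Set.Ico 0 1) (ht : 0 ≤ t) (hg : ContDiff ℝ 1 g)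
    (hmin : IsMinOn g (Set.Icc 0 t) t) : caputo β g t ≤ 0 := by
  have hboundary : 0 ≤ (t - 0) ^ (-β) * (g 0 - g t) :=
    mul_nonneg (Real.rpow_nonneg (sub_nonneg.2 ht) _)
      (sub_nonneg.2 (hmin (Set.left_mem_Icc.2 ht)))
  have hintegral := integral_sub_rpow_mul_deriv_le_of_isMinOn
    ⟨neg_lt_neg hβ.2, neg_nonpos.2 hβ.1⟩ ht hg hmin
  have hGamma : 0 < Real.Gamma (1 - β) := Real.Gamma_pos_of_pos (sub_pos.2 hβ.2)
  exact mul_nonpos_of_nonneg_of_nonpos (one_div_pos.2 hGamma).le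
    (hintegral.trans (neg_nonpos.2 hboundary))

theorem caputo_le_caputo_of_isMinOn_sub (hβ : β ∈ Set.Ico 0 1) (ht : 0 ≤ t)
    (hf : ContDiff ℝ 1 f) (hg : ContDiff ℝ 1 g)
    (hmin : IsMinOn (fun s => f s - g s) (Set.Icc 0 t) t) : caputo β f t ≤ caputo β g t := by
  rw [← sub_nonpos, ← caputo_sub hβ.2 hf hg]
  exact caputo_nonpos_of_isMinOn hβ ht (hf.sub hg) hmin

end Caputo

section QuadraticForm

variable {ι : Type*} [Fintype ι]

theorem contDiff_dotProduct {E : Type*} [NormedAddCommGroup E] [NormedSpace ℝ E]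
    {k : WithTop ℕ∞} {x y : E → ι → ℝ} (hx : ContDiff ℝ k x) (hy : ContDiff ℝ k y) :
    ContDiff ℝ k fun s => x s ⬝ᵥ y s :=
  ContDiff.sum fun i _ => (contDiff_pi.1 hx i).mul (contDiff_pi.1 hy i)

theorem isMinOn_half_dotProduct_mulVec_sub {P : Matrix ι ι ℝ} (hP : P.PosSemidef) (v : ι → ℝ) :
    IsMinOn (fun w => 1 / 2 * (w ⬝ᵥ P *ᵥ w) - (v ᵥ* P) ⬝ᵥ w) Set.univ v := by
  intro w _
  have hsymm : w ⬝ᵥ P *ᵥ v = v ⬝ᵥ P *ᵥ w := by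
    rw [dotProduct_comm, ← vecMul_transpose, (isHermitian_iff_isSymm.1 hP.isHermitian).eq,
      dotProduct_mulVec]
  have hsq : 0 ≤ (w - v) ⬝ᵥ P *ᵥ (w - v) := by
    simpa only [star_trivial] using hP.dotProduct_mulVec_nonneg (w - v)
  simp only [mulVec_sub, dotProduct_sub, sub_dotProduct, hsymm] at hsq
  simp only [Set.mem_ofPred_eq, ← dotProduct_mulVec]
  linarith

end QuadraticForm

theorem stmt_8_general {n : ℕ} {β : ℝ} (hβ : β ∈ Set.Ico 0 1) {x : ℝ → Fin n → ℝ}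
    (hx : ContDiff ℝ 1 x) {P : Matrix (Fin n) (Fin n) ℝ} (hP : P.PosSemidef) {t : ℝ}
    (ht : 0 ≤ t) :
    1 / 2 * caputo β (fun s => x s ⬝ᵥ P *ᵥ x s) t ≤ x t ⬝ᵥ P *ᵥ caputoVec β x t := by
  have hq : ContDiff ℝ 1 fun s => x s ⬝ᵥ P *ᵥ x s :=
    contDiff_dotProduct hx (contDiff_pi.2 fun _ => contDiff_dotProduct contDiff_const hx)
  have hlin : ContDiff ℝ 1 fun s => (x t ᵥ* P) ⬝ᵥ x s := contDiff_dotProduct contDiff_const hx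
  rw [dotProduct_mulVec, ← caputo_dotProduct hβ.2 _ hx, ← caputo_const_mul]
  exact caputo_le_caputo_of_isMinOn_sub hβ ht (contDiff_const.mul hq) hlin fun s _ =>
    isMinOn_half_dotProduct_mulVec_sub hP (x t) (Set.mem_univ (x s))

/-- Lemma 4.1: fractional derivative of a quadratic form,
`(1/2)·D^β(xᵀPx)(t) ≤ x(t)ᵀ P (D^β x)(t)` for symmetric positive definite `P`. -/
theorem stmt_8 {n : ℕ} (β : ℝ) (hβ : β ∈ Set.Ioo (0:ℝ) 1)
    (x : ℝ → Fin n → ℝ) (hx : ContDiff ℝ 1 x)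
    (P : Matrix (Fin n) (Fin n) ℝ) (hP : P.PosDef) :
    ∀ t ≥ (0:ℝ),
      (1 / 2) * caputo β (fun s => x s ⬝ᵥ P.mulVec (x s)) t ≤
        x t ⬝ᵥ P.mulVec (caputoVec β x t) :=
  fun _ ht => stmt_8_general (Set.Ioo_subset_Ico_self hβ) hx hP.posSemidef ht
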